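/- arXiv:1703.02376 — 2 statements merged into one kernel-verified Lean document; each statement's English description precedes it below -/
import Mathlib

section
/- Let $a \in [0,\infty)$, $b \in (-\infty, 0)$, $\gamma \in (-\infty, b)$, $\alpha, \beta \in \mathbb{R}$, $y_0 \in [0,\infty)$ and $x_0 \in \mathbb{R}$. Define $m_Y(t) := \mathrm{e}^{-bt} y_0 + a \int_0^t \mathrm{e}^{-b(t-u)}\,\mathrm{d}u$ and $m_X(t) := \mathrm{e}^{-\gamma t} x_0 + \int_0^t \mathrm{e}^{-\gamma(t-u)} (\alpha - \beta\, m_Y(u))\,\mathrm{d}u$ for $t \in [0,\infty)$. Put $C_* := \tfrac{\beta}{\gamma-b} y_0 + x_0 - \tfrac{\alpha}{\gamma} + \tfrac{a\beta}{b\gamma} - \tfrac{a\beta}{b(\gamma-b)}$. Then there exists a constant $C \in [0,\infty)$ such that $\bigl| m_X(t) - C_* \mathrm{e}^{-\gamma t} \bigr| \leq C\, \mathrm{e}^{-bt}$ for all $t \in [0,\infty)$; in particular $\mathrm{e}^{\gamma t} m_X(t) \to C_*$ as $t \to \infty$. -/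
/-!
Both convolution integrals are elementary, so `m_X` has a closed form: with `K = (α - βa/b)/γ` and
`L = -β(y₀ - a/b)/(γ - b)`, one has `m_X(t) - C* e^{-γt} = K + L e^{-bt}`. For `t ≥ 0` both `1` and
`e^{-bt}` are at most `e^{-min(b,0)t}`, and this is `e^{-bt}` when `b < 0`. After multiplication by
`e^{γt}` the error tends to zero as soon as `γ < min(b,0)`.
-/

open MeasureTheory Filter Real

open Asymptotics
open scoped Topology

section VariationOfConstants

variable {c d : ℝ}

lemma integral_exp_neg_mul_sub_mul_exp (hcd : c ≠ d) (t : ℝ) :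
    ∫ u in (0 : ℝ)..t, exp (-c * (t - u)) * exp (-d * u)
      = (exp (-d * t) - exp (-c * t)) / (c - d) := by
  have hcd' : c - d ≠ 0 := sub_ne_zero.mpr hcd
  have hfactor (u : ℝ) :
      exp (-c * (t - u)) * exp (-d * u) = exp (-c * t) * exp ((c - d) * u) := by
    rw [← exp_add, ← exp_add]
    ring_nf
  have hsplit : exp (-d * t) = exp (-c * t) * exp ((c - d) * t) := by
    rw [← exp_add]
    ring_nf
  simp only [hfactor, hsplit, intervalIntegral.integral_const_mul,
    intervalIntegral.integral_comp_mul_left _ hcd', integral_exp, mul_zero, exp_zero, smul_eq_mul]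
  ring

lemma integral_exp_neg_mul_sub (hc : c ≠ 0) (t : ℝ) :
    ∫ u in (0 : ℝ)..t, exp (-c * (t - u)) = (1 - exp (-c * t)) / c := by
  simpa using integral_exp_neg_mul_sub_mul_exp hc t

/-- The solution of `x' = p + q e^{-du} - cx`, `x(0) = x₀`, away from the resonance `c = d`. -/
lemma exp_mul_add_integral_exp_mul_const_add_exp (hc : c ≠ 0) (hcd : c ≠ d) (x₀ p q t : ℝ) :
    exp (-c * t) * x₀ + ∫ u in (0 : ℝ)..t, exp (-c * (t - u)) * (p + q * exp (-d * u))
      = p / c + q / (c - d) * exp (-d * t) + (x₀ - p / c - q / (c - d)) * exp (-c * t) := by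
  have hintegral : ∫ u in (0 : ℝ)..t, exp (-c * (t - u)) * (p + q * exp (-d * u))
      = p * ((1 - exp (-c * t)) / c) + q * ((exp (-d * t) - exp (-c * t)) / (c - d)) := by
    rw [← integral_exp_neg_mul_sub hc, ← integral_exp_neg_mul_sub_mul_exp hcd,
      ← intervalIntegral.integral_const_mul, ← intervalIntegral.integral_const_mul,
      ← intervalIntegral.integral_add (Continuous.intervalIntegrable (by fun_prop) _ _)
        (Continuous.intervalIntegrable (by fun_prop) _ _)]
    congr with u
    ring
  rw [hintegral]
  ring

end VariationOfConstants

lemma abs_const_add_mul_exp_le (K L b : ℝ) {t : ℝ} (ht : 0 ≤ t) :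
    |K + L * exp (-b * t)| ≤ (|K| + |L|) * exp (-min b 0 * t) := by
  have hone : 1 ≤ exp (-min b 0 * t) :=
    one_le_exp (mul_nonneg (neg_nonneg.mpr (min_le_right b 0)) ht)
  have hexp : exp (-b * t) ≤ exp (-min b 0 * t) := by
    gcongr
    exact min_le_left b 0
  calc |K + L * exp (-b * t)|
      ≤ |K| + |L * exp (-b * t)| := abs_add_le _ _
    _ = |K| * 1 + |L| * exp (-b * t) := by rw [abs_mul, abs_exp, mul_one]
    _ ≤ |K| * exp (-min b 0 * t) + |L| * exp (-min b 0 * t) := by gcongr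
    _ = (|K| + |L|) * exp (-min b 0 * t) := by ring

lemma tendsto_exp_mul_mul_of_sub_isBigO {b γ A : ℝ} {f : ℝ → ℝ} (hγ : γ < b)
    (hf : (fun t => f t - A * exp (-γ * t)) =O[atTop] fun t => exp (-b * t)) :
    Tendsto (fun t => exp (γ * t) * f t) atTop (𝓝 A) := by
  have hdecay : Tendsto (fun t => exp (γ * t) * exp (-b * t)) atTop (𝓝 0) := by
    have hexponent : Tendsto (fun t => (γ - b) * t) atTop atBot :=
      tendsto_id.const_mul_atTop_of_neg (sub_neg.mpr hγ)
    refine (tendsto_exp_atBot.comp hexponent).congr fun t => ?_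
    rw [Function.comp_apply, ← exp_add]
    ring_nf
  have herror : Tendsto (fun t => exp (γ * t) * (f t - A * exp (-γ * t))) atTop (𝓝 0) :=
    ((isBigO_refl _ _).mul hf).trans_tendsto hdecay
  have hcancel (t : ℝ) : exp (γ * t) * exp (-γ * t) = 1 := by
    rw [← exp_add, neg_mul, add_neg_cancel, exp_zero]
  refine tendsto_sub_nhds_zero_iff.mp (herror.congr fun t => ?_)
  linear_combination -A * hcancel t

section FirstMoments

variable {a b γ α β y₀ x₀ : ℝ} {mY mX : ℝ → ℝ}

lemma firstMomentY_eq (hb : b ≠ 0)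
    (hmY : ∀ t, mY t = exp (-b * t) * y₀ + a * ∫ u in (0 : ℝ)..t, exp (-b * (t - u))) (t : ℝ) :
    mY t = a / b + (y₀ - a / b) * exp (-b * t) := by
  rw [hmY, integral_exp_neg_mul_sub hb]
  ring

lemma firstMomentX_eq (hb : b ≠ 0) (hγ : γ ≠ 0) (hγb : γ ≠ b)
    (hmY : ∀ t, mY t = exp (-b * t) * y₀ + a * ∫ u in (0 : ℝ)..t, exp (-b * (t - u)))
    (hmX : ∀ t, mX t
      = exp (-γ * t) * x₀ + ∫ u in (0 : ℝ)..t, exp (-γ * (t - u)) * (α - β * mY u)) (t : ℝ) :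
    mX t = (α - β * (a / b)) / γ + -(β * (y₀ - a / b)) / (γ - b) * exp (-b * t)
      + (β / (γ - b) * y₀ + x₀ - α / γ + a * β / (b * γ) - a * β / (b * (γ - b)))
        * exp (-γ * t) := by
  have hsource (u : ℝ) :
      α - β * mY u = α - β * (a / b) + -(β * (y₀ - a / b)) * exp (-b * u) := by
    rw [firstMomentY_eq hb hmY]
    ring
  simp only [hmX, hsource]
  rw [exp_mul_add_integral_exp_mul_const_add_exp hγ hγb, div_mul_eq_div_div _ b (γ - b)]
  ring

end FirstMoments

theorem supercritical_first_moment_asymptotics_general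
    {a b γ α β y₀ x₀ : ℝ} (hb : b ≠ 0) (hγ : γ ≠ 0) (hγb : γ ≠ b) {mY mX : ℝ → ℝ}
    (hmY : ∀ t, mY t = exp (-b * t) * y₀ + a * ∫ u in (0 : ℝ)..t, exp (-b * (t - u)))
    (hmX : ∀ t, mX t
      = exp (-γ * t) * x₀ + ∫ u in (0 : ℝ)..t, exp (-γ * (t - u)) * (α - β * mY u))
    {Cstar : ℝ}
    (hCstar : Cstar = β / (γ - b) * y₀ + x₀ - α / γ + a * β / (b * γ)
      - a * β / (b * (γ - b))) :
    (∃ C : ℝ, 0 ≤ C ∧ ∀ t : ℝ, 0 ≤ t →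
      |mX t - Cstar * exp (-γ * t)| ≤ C * exp (-min b 0 * t)) ∧
    (γ < min b 0 → Tendsto (fun t => exp (γ * t) * mX t) atTop (𝓝 Cstar)) := by
  set K := (α - β * (a / b)) / γ
  set L := -(β * (y₀ - a / b)) / (γ - b)
  have hbound (t : ℝ) (ht : 0 ≤ t) :
      |mX t - Cstar * exp (-γ * t)| ≤ (|K| + |L|) * exp (-min b 0 * t) := by
    rw [firstMomentX_eq hb hγ hγb hmY hmX, ← hCstar, add_sub_cancel_right]
    exact abs_const_add_mul_exp_le K L b ht
  refine ⟨⟨|K| + |L|, by positivity, hbound⟩, fun hγ_lt => ?_⟩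
  refine tendsto_exp_mul_mul_of_sub_isBigO hγ_lt (IsBigO.of_bound (|K| + |L|) ?_)
  filter_upwards [eventually_ge_atTop 0] with t ht
  simpa only [norm_eq_abs, abs_exp] using hbound t ht

/-- Asymptotics of the first-moment functions of a supercritical two-factor affine diffusion
with `γ < b < 0`: `m_X(t)` equals `C* e^{-γt}` up to an error of order `e^{-bt}`, where
`C* = β/(γ-b) y₀ + x₀ - α/γ + aβ/(bγ) - aβ/(b(γ-b))`; in particular
`e^{γt} m_X(t) → C*` as `t → ∞`. -/
theorem supercritical_first_moment_asymptotics
    (a : ℝ) (ha : 0 ≤ a) (b γ : ℝ) (hb : b < 0) (hγ : γ < b)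
    (α β : ℝ) (y₀ : ℝ) (hy₀ : 0 ≤ y₀) (x₀ : ℝ)
    (mY mX : ℝ → ℝ)
    (hmY : ∀ t : ℝ, mY t
      = Real.exp (-b * t) * y₀ + a * ∫ u in (0:ℝ)..t, Real.exp (-b * (t - u)))
    (hmX : ∀ t : ℝ, mX t
      = Real.exp (-γ * t) * x₀
        + ∫ u in (0:ℝ)..t, Real.exp (-γ * (t - u)) * (α - β * mY u))
    (Cstar : ℝ)
    (hCstar : Cstar = β / (γ - b) * y₀ + x₀ - α / γ + a * β / (b * γ)
      - a * β / (b * (γ - b))) :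
    (∃ C : ℝ, 0 ≤ C ∧ ∀ t : ℝ, 0 ≤ t →
      |mX t - Cstar * Real.exp (-γ * t)| ≤ C * Real.exp (-b * t)) ∧
    Tendsto (fun t => Real.exp (γ * t) * mX t) atTop (nhds Cstar) := by
  have hmin : min b 0 = b := min_eq_left hb.le
  simpa only [hmin, hγ, forall_const] using supercritical_first_moment_asymptotics_general
    hb.ne (hγ.trans hb).ne hγ.ne hmY hmX hCstar
end

section
/- Let $b \in (-\infty, 0)$, $\sigma_1 \in \mathbb{R}$, and let $Y : [0,\infty) \to [0,\infty)$ be a continuous function such that $\mathrm{e}^{bt} Y(t) \to V$ as $t \to \infty$ for some $V \in (0,\infty)$. For $T \in (0,\infty)$ define $\widehat{b}_T := \frac{(Y(T) - Y(0)) \int_0^T Y(s)\,\mathrm{d}s - \tfrac{T}{2}(Y(T)^2 - Y(0)^2) + \tfrac{T}{2} \sigma_1^2 \int_0^T Y(s)\,\mathrm{d}s}{T \int_0^T Y(s)^2\,\mathrm{d}s - \bigl( \int_0^T Y(s)\,\mathrm{d}s \bigr)^2}$. Then $\widehat{b}_T \to b$ as $T \to \infty$. -/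
open MeasureTheory Filter Real

/-!
The path grows like `V e^{-bt}`, and by the integral form of the Stolz–Cesàro theorem integration
preserves exponential growth up to a factor: `e^{bT} ∫₀ᵀ Y → V / (-b)` and
`e^{2bT} ∫₀ᵀ Y² → V² / (-2b)`. After multiplication by `e^{2bT} / T`, all terms of `b̂_T` vanish in
the limit except `-Y(T)² / 2` in the numerator, which gives `-V² / 2`, and `∫₀ᵀ Y²` in the
denominator, which gives `V² / (-2b)`; the quotient of these limits is `b`.
-/

open Asymptotics Set
open scoped Topology

section IntegralAsymptotics

variable {E : Type*} [NormedAddCommGroup E] {f : ℝ → E} {g : ℝ → ℝ} {a : ℝ} {μ : Measure ℝ}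

lemma intervalIntegrable_of_locallyIntegrableOn_Ici {s t : ℝ}
    (hf : LocallyIntegrableOn f (Ici a) μ) (has : a ≤ s) (hst : s ≤ t) :
    IntervalIntegrable f μ s t :=
  (intervalIntegrable_iff_integrableOn_Ioc_of_le hst).2 <|
    (hf.integrableOn_compact_subset (Icc_subset_Ici_iff hst |>.2 has) isCompact_Icc).mono_set
      Ioc_subset_Icc_self

variable [NormedSpace ℝ E]

lemma isLittleO_intervalIntegral_atTop (hf : LocallyIntegrableOn f (Ici a) μ)
    (hg : LocallyIntegrableOn g (Ici a) μ) (hg_nonneg : ∀ t ∈ Ici a, 0 ≤ g t)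
    (hfg : f =o[atTop] g) (hg_int : Tendsto (fun T => ∫ t in a..T, g t ∂μ) atTop atTop) :
    (fun T => ∫ t in a..T, f t ∂μ) =o[atTop] fun T => ∫ t in a..T, g t ∂μ := by
  refine isLittleO_iff.2 fun ε hε => ?_
  obtain ⟨N, hN⟩ := eventually_atTop.1
    ((isLittleO_iff.1 hfg (half_pos hε)).and (eventually_ge_atTop a))
  have haN : a ≤ N := (hN N le_rfl).2
  have hG_nonneg {T : ℝ} (haT : a ≤ T) : 0 ≤ ∫ t in a..T, g t ∂μ :=
    intervalIntegral.integral_nonneg haT fun t ht => hg_nonneg t ht.1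
  have hhead : ∀ᶠ T in atTop, ‖∫ t in a..N, f t ∂μ‖ ≤ ε / 2 * ∫ t in a..T, g t ∂μ :=
    (hg_int.const_mul_atTop (half_pos hε)).eventually_ge_atTop _
  filter_upwards [hhead, eventually_ge_atTop N] with T hheadT hNT
  have hf_N := intervalIntegrable_of_locallyIntegrableOn_Ici hf le_rfl haN
  have hf_NT := intervalIntegrable_of_locallyIntegrableOn_Ici hf haN hNT
  have hg_N := intervalIntegrable_of_locallyIntegrableOn_Ici hg le_rfl haN
  have hg_NT := intervalIntegrable_of_locallyIntegrableOn_Ici hg haN hNT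
  have htail : ‖∫ t in N..T, f t ∂μ‖ ≤ ε / 2 * ∫ t in N..T, g t ∂μ := by
    rw [← intervalIntegral.integral_const_mul]
    refine intervalIntegral.norm_integral_le_of_norm_le hNT
      (Eventually.of_forall fun t ht => ?_) (hg_NT.const_mul _)
    obtain ⟨hfgt, hat⟩ := hN t ht.1.le
    rwa [norm_of_nonneg (hg_nonneg t hat)] at hfgt
  calc ‖∫ t in a..T, f t ∂μ‖
      = ‖(∫ t in a..N, f t ∂μ) + ∫ t in N..T, f t ∂μ‖ := by
        rw [intervalIntegral.integral_add_adjacent_intervals hf_N hf_NT]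
    _ ≤ ε / 2 * (∫ t in a..T, g t ∂μ) + ε / 2 * ∫ t in N..T, g t ∂μ :=
        norm_add_le_of_le hheadT htail
    _ ≤ ε / 2 * (∫ t in a..T, g t ∂μ) + ε / 2 * ∫ t in a..T, g t ∂μ := by
        rw [← intervalIntegral.integral_add_adjacent_intervals hg_N hg_NT]
        gcongr
        exact le_add_of_nonneg_left (hG_nonneg haN)
    _ = ε * ‖∫ t in a..T, g t ∂μ‖ := by
        rw [← add_mul, add_halves, norm_of_nonneg (hG_nonneg (haN.trans hNT))]

lemma tendsto_inv_intervalIntegral_smul_intervalIntegral [CompleteSpace E] {L : E}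
    (hf : LocallyIntegrableOn f (Ici a) μ) (hg : LocallyIntegrableOn g (Ici a) μ)
    (hg_pos : ∀ t ∈ Ici a, 0 < g t) (hlim : Tendsto (fun t => (g t)⁻¹ • f t) atTop (𝓝 L))
    (hg_int : Tendsto (fun T => ∫ t in a..T, g t ∂μ) atTop atTop) :
    Tendsto (fun T => (∫ t in a..T, g t ∂μ)⁻¹ • ∫ t in a..T, f t ∂μ) atTop (𝓝 L) := by
  have hgL : LocallyIntegrableOn (fun t => g t • L) (Ici a) μ := fun t ht =>
    (hg t ht).imp fun _ hs => ⟨hs.1, hs.2.smul_const L⟩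
  have hfg : (fun t => f t - g t • L) =o[atTop] g := by
    have hone : (fun t => (g t)⁻¹ • f t - L) =o[atTop] fun _ => (1 : ℝ) :=
      (isLittleO_one_iff ℝ).2 (tendsto_sub_nhds_zero_iff.2 hlim)
    refine ((isBigO_refl g atTop).smul_isLittleO hone).congr' ?_ (by simp)
    filter_upwards [eventually_ge_atTop a] with t ht
    rw [smul_sub, smul_inv_smul₀ (hg_pos t ht).ne']
  have hzero := (isLittleO_intervalIntegral_atTop (hf.sub hgL) hg (fun t ht => (hg_pos t ht).le)
    hfg hg_int).tendsto_inv_smul_nhds_zero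
  refine tendsto_sub_nhds_zero_iff.1 (hzero.congr' ?_)
  filter_upwards [eventually_ge_atTop a, hg_int.eventually_gt_atTop 0] with T haT hGT
  have hintegral := intervalIntegral.integral_sub
    (intervalIntegrable_of_locallyIntegrableOn_Ici hf le_rfl haT)
    (intervalIntegrable_of_locallyIntegrableOn_Ici hgL le_rfl haT)
  rw [intervalIntegral.integral_smul_const] at hintegral
  simp only [Pi.sub_apply, hintegral, smul_sub, inv_smul_smul₀ hGT.ne']

end IntegralAsymptotics

section ExponentialGrowth

variable {b : ℝ}

lemma tendsto_exp_const_mul_atTop_of_neg (hb : b < 0) :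
    Tendsto (fun t => exp (b * t)) atTop (𝓝 0) :=
  tendsto_exp_atBot.comp (tendsto_id.const_mul_atTop_of_neg hb)

lemma tendsto_exp_mul_intervalIntegral_inv_exp (hb : b < 0) (a : ℝ) :
    Tendsto (fun T => exp (b * T) * ∫ t in a..T, (exp (b * t))⁻¹) atTop (𝓝 (-b)⁻¹) := by
  have hintegral (T : ℝ) :
      ∫ t in a..T, (exp (b * t))⁻¹ = (-b)⁻¹ * ((exp (b * T))⁻¹ - (exp (b * a))⁻¹) := by
    simp_rw [← exp_neg, ← neg_mul]
    rw [intervalIntegral.integral_comp_mul_left exp (neg_ne_zero.2 hb.ne), integral_exp,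
      smul_eq_mul]
  have hscaled (T : ℝ) : (-b)⁻¹ * (1 - exp (b * T) * (exp (b * a))⁻¹) =
      exp (b * T) * ∫ t in a..T, (exp (b * t))⁻¹ := by
    rw [hintegral, mul_left_comm, mul_sub (exp _), mul_inv_cancel₀ (exp_ne_zero _)]
  have hlim := (((tendsto_exp_const_mul_atTop_of_neg hb).mul_const (exp (b * a))⁻¹).const_sub
    1).const_mul (-b)⁻¹
  simpa only [hscaled, zero_mul, sub_zero, mul_one] using hlim

lemma tendsto_exp_smul_intervalIntegral {E : Type*} [NormedAddCommGroup E] [NormedSpace ℝ E]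
    [CompleteSpace E] {f : ℝ → E} {a : ℝ} {L : E} (hb : b < 0)
    (hf : LocallyIntegrableOn f (Ici a))
    (hlim : Tendsto (fun t => exp (b * t) • f t) atTop (𝓝 L)) :
    Tendsto (fun T => exp (b * T) • ∫ t in a..T, f t) atTop (𝓝 ((-b)⁻¹ • L)) := by
  have hscaled := tendsto_exp_mul_intervalIntegral_inv_exp hb a
  have hinv_exp : Tendsto (fun T => (exp (b * T))⁻¹) atTop atTop := by
    simpa only [← exp_neg, ← neg_mul, Function.comp_def, id] using
      tendsto_exp_atTop.comp (tendsto_id.const_mul_atTop (neg_pos.2 hb))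
  have hintegral_atTop : Tendsto (fun T => ∫ t in a..T, (exp (b * t))⁻¹) atTop atTop :=
    (hinv_exp.atTop_mul_pos (inv_pos.2 (neg_pos.2 hb)) hscaled).congr fun T =>
      inv_mul_cancel_left₀ (exp_ne_zero _) _
  have hcont : Continuous fun t => (exp (b * t))⁻¹ := by fun_prop (disch := simp)
  have hquot := tendsto_inv_intervalIntegral_smul_intervalIntegral hf
    (hcont.locallyIntegrable.locallyIntegrableOn _)
    (fun t _ => inv_pos.2 (exp_pos _)) (by simpa only [inv_inv] using hlim) hintegral_atTop
  refine (hscaled.smul hquot).congr' ?_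
  filter_upwards [hintegral_atTop.eventually_gt_atTop 0] with T hT
  rw [mul_smul, smul_inv_smul₀ hT.ne']

end ExponentialGrowth

section Estimator

variable {b V : ℝ} {Y : ℝ → ℝ}

lemma tendsto_exp_sq_div_mul_clse_numerator (hb : b < 0) (σ₁ : ℝ)
    (hY : LocallyIntegrableOn Y (Ici 0))
    (hlim : Tendsto (fun t => exp (b * t) * Y t) atTop (𝓝 V)) :
    Tendsto (fun T => exp (b * T) ^ 2 / T *
        ((Y T - Y 0) * (∫ s in 0..T, Y s) - T / 2 * ((Y T) ^ 2 - (Y 0) ^ 2)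
          + T / 2 * σ₁ ^ 2 * ∫ s in 0..T, Y s))
      atTop (𝓝 (-(V ^ 2 / 2))) := by
  have hexp := tendsto_exp_const_mul_atTop_of_neg hb
  have hintegral := tendsto_exp_smul_intervalIntegral hb hY hlim
  simp only [smul_eq_mul] at hintegral
  have hproduct : Tendsto (fun T => (exp (b * T) * Y T - exp (b * T) * Y 0) *
      (exp (b * T) * ∫ s in 0..T, Y s) * T⁻¹) atTop (𝓝 0) := by
    simpa only [mul_zero] using
      ((hlim.sub (hexp.mul_const (Y 0))).mul hintegral).mul tendsto_inv_atTop_zero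
  have hsquares : Tendsto (fun T => ((exp (b * T) * Y T) ^ 2 - (exp (b * T) * Y 0) ^ 2) / 2)
      atTop (𝓝 (V ^ 2 / 2)) := by
    simpa only [zero_mul, zero_pow two_ne_zero, sub_zero] using
      ((hlim.pow 2).sub ((hexp.mul_const (Y 0)).pow 2)).div_const 2
  have hdrift : Tendsto (fun T => σ₁ ^ 2 / 2 * (exp (b * T) * (exp (b * T) *
      ∫ s in 0..T, Y s))) atTop (𝓝 0) := by
    simpa only [zero_mul, mul_zero] using (hexp.mul hintegral).const_mul (σ₁ ^ 2 / 2)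
  have hsum := (hproduct.sub hsquares).add hdrift
  rw [zero_sub, add_zero] at hsum
  refine hsum.congr' ?_
  filter_upwards [eventually_ne_atTop 0] with T hT
  field

lemma tendsto_exp_sq_div_mul_clse_denominator (hb : b < 0)
    (hY : LocallyIntegrableOn Y (Ici 0)) (hY_sq : LocallyIntegrableOn (fun t => Y t ^ 2) (Ici 0))
    (hlim : Tendsto (fun t => exp (b * t) * Y t) atTop (𝓝 V)) :
    Tendsto (fun T => exp (b * T) ^ 2 / T *
        (T * (∫ s in 0..T, (Y s) ^ 2) - (∫ s in 0..T, Y s) ^ 2))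
      atTop (𝓝 ((-(2 * b))⁻¹ * V ^ 2)) := by
  have hexp_sq (t : ℝ) : exp (b * t) ^ 2 = exp (2 * b * t) := by
    rw [← exp_nat_mul, Nat.cast_ofNat, mul_assoc]
  have hintegral := tendsto_exp_smul_intervalIntegral hb hY hlim
  have hintegral_sq := tendsto_exp_smul_intervalIntegral (b := 2 * b) (by linarith) hY_sq
    (by simpa only [mul_pow, hexp_sq, smul_eq_mul] using hlim.pow 2)
  simp only [smul_eq_mul, ← hexp_sq] at hintegral hintegral_sq
  have hsquare : Tendsto (fun T => (exp (b * T) * ∫ s in 0..T, Y s) ^ 2 * T⁻¹) atTop (𝓝 0) := by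
    simpa only [mul_zero] using (hintegral.pow 2).mul tendsto_inv_atTop_zero
  have hdiff := hintegral_sq.sub hsquare
  rw [sub_zero] at hdiff
  refine hdiff.congr' ?_
  filter_upwards [eventually_ne_atTop 0] with T hT
  field

theorem clse_b_supercritical_consistency_general (hb : b < 0) (σ₁ : ℝ)
    (hY : LocallyIntegrableOn Y (Ici 0)) (hY_sq : LocallyIntegrableOn (fun t => Y t ^ 2) (Ici 0))
    (hV : V ≠ 0) (hlim : Tendsto (fun t => exp (b * t) * Y t) atTop (𝓝 V)) {bhat : ℝ → ℝ}
    (hbhat : ∀ T : ℝ, 0 < T → bhat T =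
      ((Y T - Y 0) * (∫ s in 0..T, Y s)
        - T / 2 * ((Y T) ^ 2 - (Y 0) ^ 2)
        + T / 2 * σ₁ ^ 2 * ∫ s in 0..T, Y s)
      / (T * (∫ s in 0..T, (Y s) ^ 2) - (∫ s in 0..T, Y s) ^ 2)) :
    Tendsto bhat atTop (𝓝 b) := by
  have hlimit_ne : (-(2 * b))⁻¹ * V ^ 2 ≠ 0 := by simp [hV, hb.ne]
  have hquot := (tendsto_exp_sq_div_mul_clse_numerator hb σ₁ hY hlim).div
    (tendsto_exp_sq_div_mul_clse_denominator hb hY hY_sq hlim) hlimit_ne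
  have hlimit : -(V ^ 2 / 2) / ((-(2 * b))⁻¹ * V ^ 2) = b := by field [hb.ne]
  rw [hlimit] at hquot
  refine hquot.congr' ?_
  filter_upwards [eventually_gt_atTop 0] with T hT
  rw [hbhat T hT, Pi.div_apply, mul_div_mul_left _ _ (by positivity)]

end Estimator

/-- Pathwise strong consistency of the CLSE of `b` for a supercritical CIR path: if `b < 0`,
`Y : [0,∞) → [0,∞)` is continuous and `e^{bt} Y(t) → V ∈ (0,∞)`, then the estimator
`b̂_T` (expressed through `Y(0)`, `Y(T)`, `∫_0^T Y` and `∫_0^T Y²`) converges to `b`. -/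
theorem clse_b_supercritical_consistency
    (b : ℝ) (hb : b < 0) (σ₁ : ℝ)
    (Y : ℝ → ℝ) (hY_cont : ContinuousOn Y (Set.Ici 0))
    (hY_nonneg : ∀ t ∈ Set.Ici (0:ℝ), 0 ≤ Y t)
    (V : ℝ) (hV : 0 < V)
    (hlim : Tendsto (fun t => Real.exp (b * t) * Y t) atTop (nhds V))
    (bhat : ℝ → ℝ)
    (hbhat : ∀ T : ℝ, 0 < T → bhat T =
      ((Y T - Y 0) * (∫ s in (0:ℝ)..T, Y s)
        - T / 2 * ((Y T) ^ 2 - (Y 0) ^ 2)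
        + T / 2 * σ₁ ^ 2 * ∫ s in (0:ℝ)..T, Y s)
      / (T * (∫ s in (0:ℝ)..T, (Y s) ^ 2) - (∫ s in (0:ℝ)..T, Y s) ^ 2)) :
    Tendsto bhat atTop (nhds b) := by
  exact clse_b_supercritical_consistency_general hb σ₁
    (hY_cont.locallyIntegrableOn measurableSet_Ici)
    ((hY_cont.pow 2).locallyIntegrableOn measurableSet_Ici) hV.ne' hlim hbhat
end
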